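/- Let δ̄ > 0 and let (u, v) ∈ S(δ̄) with associated convex domains Ω₁ and Ω₂ (each with nonempty interior and with 0 ∈ ∂Ω₁ ∩ ∂Ω₂). Then the left tangents satisfy L_{Ω₁}(0) · L_{Ω₂}(0) ≥ 0 and the right tangents satisfy R_{Ω₁}(0) · R_{Ω₂}(0) ≥ 0; equivalently, corresponding one-sided tangent directions of Ω₁ and Ω₂ at the origin are within angle π/2 of each other. -/

import Mathlib

noncomputable section

open MeasureTheory Metric Set
open scoped RealInnerProductSpace

abbrev R2 : Type := EuclideanSpace ℝ (Fin 2)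

/-- `p` is a subgradient of `f` at `x`. -/
def SubgradAt (f : R2 → ℝ) (x p : R2) : Prop :=
  ∀ y : R2, f x + ⟪p, y - x⟫ ≤ f y

/-- `ψ` is a (canonically extended) potential of the optimal transport between `U₁` and `U₂`:
it is convex on `ℝ²`, all its subgradients lie in `closure U₂`, and its gradient map pushes
the Lebesgue measure restricted to `U₁` forward to the Lebesgue measure restricted to `U₂`. -/
def IsOTPotential (U₁ U₂ : Set R2) (ψ : R2 → ℝ) : Prop :=
  ConvexOn ℝ Set.univ ψ ∧
  (∀ x p : R2, SubgradAt ψ x p → p ∈ closure U₂) ∧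
  MeasureTheory.Measure.map (fun x => gradient ψ x) (MeasureTheory.volume.restrict U₁) =
    MeasureTheory.volume.restrict U₂

/-- `S` is a centred section of `w` at `x₀` of height `h`:
`S = {w < w x₀ + p · (· - x₀) + h}` for a slope `p` chosen so that
the centre of mass of `S` is `x₀`. -/
def IsCentredSection (w : R2 → ℝ) (x₀ : R2) (h : ℝ) (S : Set R2) : Prop :=
  ∃ p : R2, S = {x : R2 | w x < w x₀ + ⟪p, x - x₀⟫ + h} ∧
    (∫ x in S, (x - x₀) ∂(MeasureTheory.volume)) = 0

/-- Dilation of `S` about `x₀` by factor `t`. -/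
def dilate (x₀ : R2) (t : ℝ) (S : Set R2) : Set R2 :=
  (fun x => x₀ + t • (x - x₀)) '' S

/-- The (closed) ellipse centred at `0` with half-axis `A` in unit direction `e` and
half-axis `B` in the orthogonal unit direction `f`. -/
def ellipse (e f : R2) (A B : ℝ) : Set R2 :=
  {x : R2 | (⟪x, e⟫ / A) ^ 2 + (⟪x, f⟫ / B) ^ 2 ≤ 1}

/-- `w` is an Alexandrov solution of `det D² w = χ_Ω` in `ℝ²`: the Lebesgue measure of the
subdifferential image of any Borel set `E` equals the Lebesgue measure of `E ∩ Ω`. -/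
def AlexandrovSol (w : R2 → ℝ) (Ω : Set R2) : Prop :=
  ∀ E : Set R2, MeasurableSet E →
    MeasureTheory.volume (⋃ x ∈ E, {p : R2 | SubgradAt w x p}) =
      MeasureTheory.volume (E ∩ Ω)

/-- Membership of the pair `(u, v)` in the normalized family `S(δ̄)`, together with the
associated data: the domains `Ω₁, Ω₂`, and, for each height `h ∈ (0,1]`, the ellipse
`E_h = ellipse (e h) (f h) (L h) (l h)` centred at `0` (long half-axis `L h` in unit
direction `e h`, short half-axis `l h` in the orthogonal unit direction `f h`, area `hπ`,
so `L h * l h = h`), whose perpendicular ellipse is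
`E_h^⊥ = ellipse (f h) (e h) (L h) (l h)`.  The eccentricity is `η_u(h) = L h / l h`. -/
def InSFamily (δb : ℝ) (u v : R2 → ℝ) (Ω₁ Ω₂ : Set R2)
    (L l : ℝ → ℝ) (e f : ℝ → R2) : Prop :=
  ConvexOn ℝ Set.univ u ∧ ConvexOn ℝ Set.univ v ∧
  Convex ℝ Ω₁ ∧ Convex ℝ Ω₂ ∧
  (interior Ω₁).Nonempty ∧ (interior Ω₂).Nonempty ∧
  (0 : R2) ∈ frontier Ω₁ ∧ (0 : R2) ∈ frontier Ω₂ ∧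
  (fun x => gradient u x) '' Ω₁ = Ω₂ ∧ (fun y => gradient v y) '' Ω₂ = Ω₁ ∧
  AlexandrovSol u Ω₁ ∧ u 0 = 0 ∧ SubgradAt u 0 0 ∧
  AlexandrovSol v Ω₂ ∧ v 0 = 0 ∧ SubgradAt v 0 0 ∧
  (∀ y ∈ Ω₂, v y = ⨆ x : R2, (⟪x, y⟫ - u x)) ∧
  L 1 = 1 ∧ l 1 = 1 ∧
  (∀ h : ℝ, h ∈ Set.Ioc (0 : ℝ) 1 →
    ‖e h‖ = 1 ∧ ‖f h‖ = 1 ∧ ⟪e h, f h⟫ = 0 ∧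
    0 < l h ∧ l h ≤ L h ∧ L h * l h = h ∧
    (∃ S : Set R2, IsCentredSection u 0 h S ∧
      (∃ xh : R2, (fun z => xh + δb • z) '' ellipse (e h) (f h) (L h) (l h) ⊆ Ω₁ ∩ S) ∧
      S ⊆ (fun z => δb⁻¹ • z) '' ellipse (e h) (f h) (L h) (l h)) ∧
    (∃ S : Set R2, IsCentredSection v 0 h S ∧
      (∃ yh : R2, (fun z => yh + δb • z) '' ellipse (f h) (e h) (L h) (l h) ⊆ Ω₂ ∩ S) ∧
      S ⊆ (fun z => δb⁻¹ • z) '' ellipse (f h) (e h) (L h) (l h)))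

/-- `z ↦ t • x` cone over `Ω` with vertex `0` (closed): the tangent cone of `Ω` at `0`. -/
def tangentConeZero (Ω : Set R2) : Set R2 :=
  closure {y : R2 | ∃ t : ℝ, 0 ≤ t ∧ ∃ x ∈ Ω, y = t • x}

/-- The planar cross product (determinant) of two vectors. -/
def det2 (a b : R2) : ℝ := a 0 * b 1 - a 1 * b 0

/-- `r` is the unit direction of the right tangent ray of `∂Ω` at `0`:
it lies in the tangent cone of `Ω` at `0` and the whole tangent cone lies
(weakly) counterclockwise from it. -/
def IsRightTangent (Ω : Set R2) (r : R2) : Prop :=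
  ‖r‖ = 1 ∧ r ∈ tangentConeZero Ω ∧ ∀ x ∈ tangentConeZero Ω, 0 ≤ det2 r x

/-- `l` is the unit direction of the left tangent ray of `∂Ω` at `0`:
it lies in the tangent cone of `Ω` at `0` and the whole tangent cone lies
(weakly) clockwise from it. -/
def IsLeftTangent (Ω : Set R2) (l : R2) : Prop :=
  ‖l‖ = 1 ∧ l ∈ tangentConeZero Ω ∧ ∀ x ∈ tangentConeZero Ω, det2 l x ≤ 0

/-- The open cone of direction `e` and opening angle `θ`. -/
def cone2 (e : R2) (θ : ℝ) : Set R2 :=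
  {y : R2 | ∃ lam : ℝ, 0 < lam ∧ ∃ w : R2, ‖w‖ = 1 ∧
    InnerProductGeometry.angle w e < θ ∧ y = lam • w}

/-!
If `∇w` is the gradient of a convex function with minimum at `0`, then `⟪∇w x, x⟫ > 0` wherever
`∇w x ≠ 0`. Applied to `u` and to `v`, this says that every nonzero point of either domain has
positive inner product with some point of the other one.

Suppose `⟪r₁, r₂⟫ < 0` for corresponding tangents. The tangency conditions turn the planar identity
`⟪r₁, r₂⟫⟪x, y⟫ - ⟪r₁, y⟫⟪x, r₂⟫ = det(r₁, x) det(r₂, y)` into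
`⟪r₁, y⟫⟪x, r₂⟫ ≤ ⟪r₁, r₂⟫⟪x, y⟫` for `x ∈ Ω₁` and `y ∈ Ω₂`. Near the direction `r₁` the domain `Ω₁`
has points with `⟪x, r₂⟫ < 0`. Near the direction `r₂` the domain `Ω₂` has a `y` with
`⟪r₁, y⟫ < 0`, and a point `z ∈ Ω₁` paired positively with `y` satisfies `⟪z, r₂⟫ > 0`. So `Ω₁`
crosses the line `⟪x, r₂⟫ = 0` at an interior point, which by the inequality is paired positively
with no point of `Ω₂`.
-/

section ConvexFunction

variable {E : Type*} [NormedAddCommGroup E] [NormedSpace ℝ E] {s : Set E} {w : E → ℝ} {x y : E}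

theorem add_fderiv_le_of_convexOn (hw : ConvexOn ℝ s w) (hx : x ∈ s) (hy : y ∈ s)
    (hdiff : DifferentiableAt ℝ w x) : w x + fderiv ℝ w x (y - x) ≤ w y := by
  have hline : ConvexOn ℝ (AffineMap.lineMap x y ⁻¹' s) (w ∘ AffineMap.lineMap (k := ℝ) x y) :=
    hw.comp_affineMap (AffineMap.lineMap x y)
  have hderiv : HasDerivAt (w ∘ AffineMap.lineMap (k := ℝ) x y) (fderiv ℝ w x (y - x)) 0 :=
    HasFDerivAt.comp_hasDerivAt (0 : ℝ) (by simpa using hdiff.hasFDerivAt)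
      AffineMap.hasDerivAt_lineMap
  have hslope := hline.le_slope_of_hasDerivAt (by simpa using hx) (by simpa using hy)
    zero_lt_one hderiv
  simp only [slope_def_field, Function.comp_apply, AffineMap.lineMap_apply_zero,
    AffineMap.lineMap_apply_one, sub_zero, div_one] at hslope
  linarith

open scoped Topology in
theorem fderiv_sub_pos_of_convexOn_of_isMinOn (hw : ConvexOn ℝ s w) (hmin : IsMinOn w s y)
    (hs : s ∈ 𝓝 x) (hy : y ∈ s) (hx : fderiv ℝ w x ≠ 0) : 0 < fderiv ℝ w x (x - y) := by
  by_contra! hle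
  have hdiff : DifferentiableAt ℝ w x := by
    by_contra hdiff
    exact hx (fderiv_zero_of_not_differentiableAt hdiff)
  have htangent := add_fderiv_le_of_convexOn hw (mem_of_mem_nhds hs) hy hdiff
  rw [← neg_sub x y, map_neg] at htangent
  have hxy : w x ≤ w y := by linarith
  have hminx : IsMinOn w s x := isMinOn_iff.2 fun z hz => hxy.trans (hmin hz)
  exact hx (hminx.isLocalMin hs).fderiv_eq_zero

end ConvexFunction

theorem exists_inner_pos_of_surjOn_gradient {E : Type*} [NormedAddCommGroup E]
    [InnerProductSpace ℝ E] [CompleteSpace E] {w : E → ℝ} {A B : Set E}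
    (hw : ConvexOn ℝ univ w) (hmin : IsMinOn w univ 0) (hsurj : SurjOn (gradient w) A B)
    {y : E} (hy : y ∈ B) (hy0 : y ≠ 0) : ∃ x ∈ A, 0 < ⟪x, y⟫ := by
  obtain ⟨x, hx, rfl⟩ := hsurj hy
  have hfderiv : fderiv ℝ w x ≠ 0 := fun h => hy0 (by simp [gradient, h])
  have hpos := fderiv_sub_pos_of_convexOn_of_isMinOn hw hmin Filter.univ_mem (mem_univ 0) hfderiv
  rw [← inner_gradient_left, sub_zero, real_inner_comm] at hpos
  exact ⟨x, hx, hpos⟩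

theorem exists_mem_interior_eq_zero_of_convex {E : Type*} [AddCommGroup E] [Module ℝ E]
    [TopologicalSpace E] [IsTopologicalAddGroup E] [ContinuousSMul ℝ E] {Ω : Set E} {g : E → ℝ}
    (hΩ : Convex ℝ Ω) (hint : (interior Ω).Nonempty) (hg : Continuous g)
    (hneg : ∃ x ∈ Ω, g x < 0) (hpos : ∃ z ∈ Ω, 0 < g z) : ∃ w ∈ interior Ω, g w = 0 := by
  have hdense : Ω ⊆ closure (interior Ω) :=
    subset_closure.trans_eq (hΩ.closure_interior_eq_closure_of_nonempty_interior hint).symm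
  obtain ⟨x, hx, hgx⟩ := hneg
  obtain ⟨z, hz, hgz⟩ := hpos
  obtain ⟨x', hgx', hx'⟩ := mem_closure_iff.1 (hdense hx) _ (isOpen_lt hg continuous_const) hgx
  obtain ⟨z', hgz', hz'⟩ := mem_closure_iff.1 (hdense hz) _ (isOpen_lt continuous_const hg) hgz
  exact hΩ.interior.isPreconnected.intermediate_value hx' hz' hg.continuousOn
    ⟨le_of_lt hgx', le_of_lt hgz'⟩

theorem inner_mul_inner_sub_inner_mul_inner (a b c d : R2) :
    ⟪a, b⟫ * ⟪c, d⟫ - ⟪a, d⟫ * ⟪c, b⟫ = det2 a c * det2 b d := by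
  simp only [PiLp.inner_apply, Fin.sum_univ_two, RCLike.inner_apply, conj_trivial, det2]
  ring

theorem subset_tangentConeZero (Ω : Set R2) : Ω ⊆ tangentConeZero Ω := fun x hx =>
  subset_closure ⟨1, zero_le_one, x, hx, (one_smul ℝ x).symm⟩

theorem exists_inner_neg_of_mem_tangentConeZero {Ω : Set R2} {r w : R2}
    (hr : r ∈ tangentConeZero Ω) (hw : ⟪r, w⟫ < 0) : ∃ x ∈ Ω, ⟪x, w⟫ < 0 := by
  obtain ⟨_, htx, t, ht, x, hx, rfl⟩ := mem_closure_iff.1 hr {x | ⟪x, w⟫ < 0}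
    (isOpen_lt (by fun_prop) continuous_const) hw
  have htx : t * ⟪x, w⟫ < 0 := by rwa [← real_inner_smul_left]
  exact ⟨x, hx, neg_of_mul_neg_right htx ht⟩

theorem inner_nonneg_of_det2_mul_det2_nonneg {Ω₁ Ω₂ : Set R2} {r₁ r₂ : R2}
    (hΩ₁ : Convex ℝ Ω₁) (hint : (interior Ω₁).Nonempty) (h0 : 0 ∉ interior Ω₁)
    (hpair₁ : ∀ x ∈ Ω₁, x ≠ 0 → ∃ y ∈ Ω₂, 0 < ⟪x, y⟫)
    (hpair₂ : ∀ y ∈ Ω₂, y ≠ 0 → ∃ x ∈ Ω₁, 0 < ⟪x, y⟫)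
    (hr₁ : r₁ ∈ tangentConeZero Ω₁) (hr₂ : r₂ ∈ tangentConeZero Ω₂)
    (hdet : ∀ x ∈ Ω₁, ∀ y ∈ Ω₂, 0 ≤ det2 r₁ x * det2 r₂ y) : 0 ≤ ⟪r₁, r₂⟫ := by
  by_contra! hneg
  have hkey : ∀ x ∈ Ω₁, ∀ y ∈ Ω₂, ⟪r₁, y⟫ * ⟪x, r₂⟫ ≤ ⟪r₁, r₂⟫ * ⟪x, y⟫ := fun x hx y hy =>
    sub_nonneg.1 ((hdet x hx y hy).trans_eq (inner_mul_inner_sub_inner_mul_inner r₁ r₂ x y).symm)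
  have hΩ₁neg : ∃ x ∈ Ω₁, ⟪x, r₂⟫ < 0 := exists_inner_neg_of_mem_tangentConeZero hr₁ hneg
  have hΩ₁pos : ∃ z ∈ Ω₁, 0 < ⟪z, r₂⟫ := by
    obtain ⟨y, hy, hyr₁⟩ := exists_inner_neg_of_mem_tangentConeZero hr₂
      ((real_inner_comm r₁ r₂).trans_lt hneg)
    rw [real_inner_comm] at hyr₁
    obtain ⟨z, hz, hzy⟩ := hpair₂ y hy fun h => by simp [h] at hyr₁
    have hlt : ⟪r₁, y⟫ * ⟪z, r₂⟫ < 0 := (hkey z hz y hy).trans_lt (mul_neg_of_neg_of_pos hneg hzy)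
    exact ⟨z, hz, pos_of_mul_neg_right hlt hyr₁.le⟩
  obtain ⟨x, hx, hxr₂⟩ := exists_mem_interior_eq_zero_of_convex hΩ₁ hint
    (g := fun x => ⟪x, r₂⟫) (by fun_prop) hΩ₁neg hΩ₁pos
  obtain ⟨y, hy, hxy⟩ := hpair₁ x (interior_subset hx) (ne_of_mem_of_not_mem hx h0)
  have hle := hkey x (interior_subset hx) y hy
  rw [hxr₂, mul_zero] at hle
  exact hle.not_gt (mul_neg_of_neg_of_pos hneg hxy)

theorem subgradAt_zero_iff_isMinOn {w : R2 → ℝ} {x : R2} :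
    SubgradAt w x 0 ↔ IsMinOn w univ x := by
  simp [SubgradAt, isMinOn_iff]

theorem stmt_10_general {u v : R2 → ℝ} {Ω₁ Ω₂ : Set R2}
    (hu : ConvexOn ℝ univ u) (hv : ConvexOn ℝ univ v)
    (humin : SubgradAt u 0 0) (hvmin : SubgradAt v 0 0)
    (hgu : SurjOn (gradient u) Ω₁ Ω₂) (hgv : SurjOn (gradient v) Ω₂ Ω₁)
    (hΩ₁ : Convex ℝ Ω₁) (hint : (interior Ω₁).Nonempty) (h0 : 0 ∉ interior Ω₁)
    {L₁ L₂ R₁ R₂ : R2}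
    (hL₁ : IsLeftTangent Ω₁ L₁) (hL₂ : IsLeftTangent Ω₂ L₂)
    (hR₁ : IsRightTangent Ω₁ R₁) (hR₂ : IsRightTangent Ω₂ R₂) :
    0 ≤ ⟪L₁, L₂⟫ ∧ 0 ≤ ⟪R₁, R₂⟫ := by
  have hpair₁ : ∀ x ∈ Ω₁, x ≠ 0 → ∃ y ∈ Ω₂, 0 < ⟪x, y⟫ := fun x hx hx0 => by
    simpa only [real_inner_comm] using
      exists_inner_pos_of_surjOn_gradient hv (subgradAt_zero_iff_isMinOn.1 hvmin) hgv hx hx0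
  have hpair₂ : ∀ y ∈ Ω₂, y ≠ 0 → ∃ x ∈ Ω₁, 0 < ⟪x, y⟫ := fun y =>
    exists_inner_pos_of_surjOn_gradient hu (subgradAt_zero_iff_isMinOn.1 humin) hgu
  obtain ⟨-, hL₁mem, hL₁det⟩ := hL₁
  obtain ⟨-, hL₂mem, hL₂det⟩ := hL₂
  obtain ⟨-, hR₁mem, hR₁det⟩ := hR₁
  obtain ⟨-, hR₂mem, hR₂det⟩ := hR₂
  constructor
  · exact inner_nonneg_of_det2_mul_det2_nonneg hΩ₁ hint h0 hpair₁ hpair₂ hL₁mem hL₂mem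
      fun x hx y hy => mul_nonneg_of_nonpos_of_nonpos (hL₁det x (subset_tangentConeZero Ω₁ hx))
        (hL₂det y (subset_tangentConeZero Ω₂ hy))
  · exact inner_nonneg_of_det2_mul_det2_nonneg hΩ₁ hint h0 hpair₁ hpair₂ hR₁mem hR₂mem
      fun x hx y hy => mul_nonneg (hR₁det x (subset_tangentConeZero Ω₁ hx))
        (hR₂det y (subset_tangentConeZero Ω₂ hy))

/-- weak obliqueness for pairs in `S(δ̄)`: at the origin, corresponding
one-sided tangents of `Ω₁` and `Ω₂` make a nonnegative inner product (angle at most `π/2`). -/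
theorem stmt_10 (δb : ℝ) (hδb : 0 < δb)
    (u v : R2 → ℝ) (Ω₁ Ω₂ : Set R2) (L l : ℝ → ℝ) (e f : ℝ → R2)
    (hmem : InSFamily δb u v Ω₁ Ω₂ L l e f)
    (L₁ L₂ R₁ R₂ : R2)
    (hL₁ : IsLeftTangent Ω₁ L₁) (hL₂ : IsLeftTangent Ω₂ L₂)
    (hR₁ : IsRightTangent Ω₁ R₁) (hR₂ : IsRightTangent Ω₂ R₂) :
    0 ≤ ⟪L₁, L₂⟫ ∧ 0 ≤ ⟪R₁, R₂⟫ := by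
  obtain ⟨hu, hv, hΩ₁, -, hint, -, h0, -, hgu, hgv, -, -, humin, -, -, hvmin, -⟩ := hmem
  exact stmt_10_general hu hv humin hvmin hgu.ge hgv.ge hΩ₁ hint h0.2 hL₁ hL₂ hR₁ hR₂
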